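/- arXiv:1403.1335 — 2 statements merged into one kernel-verified Lean document; each statement's English description precedes it below -/
import Mathlib

section
/- (Example, 3-prototile simplest form) Let B = 2 act on ℝ, and set K_1' = [−3/4, −1/2], K_2' = [−1/2, 0], K_3' = [0, 1/4], K = [−3/4, 1/4]. Then 2K_1' = K_2' − 1, 2K_2' = K_1' ∪ K_2' ∪ (K_3' − 1), 2K_3' = (K_1' + 1) ∪ K_3'; the collection {K_1', K_2', K_3'} is an integral self-affine collection associated with B = 2; each digit set D_1' = {0,1}, D_2' = D_3' = {−1,0} is a complete set of coset representatives of ℤ/2ℤ; and K = K_1' ∪ K_2' ∪ K_3' is an integral self-affine ℤ-tiling set with 3 prototiles. -/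
open MeasureTheory Pointwise

namespace ISAMT1

/-- Translation of a subset of `ℝ` by an integer. -/
def tr (c : ℤ) (E : Set ℝ) : Set ℝ := (fun x => (c : ℝ) + x) '' E

/-- An integral self-affine collection in dimension one, associated with an integer `B`
(`|B| > 1`), with digit sets `Γ i j ⊆ ℤ`.  Equality of measurable sets is understood modulo
Lebesgue-null sets, so the self-affine set equation is stated almost everywhere and the
disjointness condition states that intersections are null. -/
structure IsSelfAffineCollection (B : ℤ) {M : ℕ} (K : Fin M → Set ℝ)
    (Γ : Fin M → Fin M → Finset ℤ) : Prop where
  compact : ∀ i, IsCompact (K i)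
  selfaffine : ∀ i, (fun x => (B : ℝ) * x) '' K i =ᵐ[volume] ⋃ j, ⋃ γ ∈ Γ i j, tr γ (K j)
  disj : ∀ k i j : Fin M, ∀ β ∈ Γ k i, ∀ γ ∈ Γ k j, (i ≠ j ∨ β ≠ γ) →
    volume (tr β (K i) ∩ tr γ (K j)) = 0

/-- The collection `K` ℤ-tiles `ℝ`: its members are pairwise essentially disjoint, and the
ℤ-translates of their union are pairwise essentially disjoint and cover `ℝ` up to a null set. -/
def TilesZ {M : ℕ} (K : Fin M → Set ℝ) : Prop :=
  (∀ i j : Fin M, i ≠ j → volume (K i ∩ K j) = 0) ∧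
  (∀ ℓ₁ ℓ₂ : ℤ, ℓ₁ ≠ ℓ₂ → volume (tr ℓ₁ (⋃ i, K i) ∩ tr ℓ₂ (⋃ i, K i)) = 0) ∧
  volume ((Set.univ : Set ℝ) \ ⋃ ℓ : ℤ, tr ℓ (⋃ i, K i)) = 0

/-- `D` is a complete set of coset representatives of `ℤ/Bℤ`. -/
def CompleteResidues (B : ℤ) (D : Finset ℤ) : Prop :=
  ∀ v : ℤ, ∃! d, d ∈ D ∧ ∃ z : ℤ, v = d + B * z

/-!
The three prototiles are the pieces of a partition of an interval of length one, so they `ℤ`-tile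
`ℝ`. In a `ℤ`-tiling the translates `β + K_i` and `γ + K_j` overlap in a null set unless
`(i, β) = (j, γ)`, so the disjointness condition of a self-affine collection is automatic and only
the dilation identities remain to be checked; they are identities between intervals.
-/

theorem tr_zero (E : Set ℝ) : tr 0 E = E := by
  simp only [tr, Int.cast_zero, zero_add, Set.image_id']

theorem tr_mono (c : ℤ) {E F : Set ℝ} (h : E ⊆ F) : tr c E ⊆ tr c F :=
  Set.image_mono h

theorem tr_Icc (c : ℤ) (a b : ℝ) : tr c (Set.Icc a b) = Set.Icc (c + a) (c + b) :=
  Set.image_const_add_Icc _ _ _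

theorem aedisjoint_tr (c : ℤ) {E F : Set ℝ} (h : AEDisjoint volume E F) :
    AEDisjoint volume (tr c E) (tr c F) := by
  have hpre (G : Set ℝ) : tr c G = (fun x => -(c : ℝ) + x) ⁻¹' G := Set.image_add_left
  rw [hpre, hpre]
  exact h.preimage (measurePreserving_add_left volume _).quasiMeasurePreserving

theorem pairwise_aedisjoint_Icc {α ι : Type*} [PartialOrder α] [MeasurableSpace α]
    (μ : Measure α) [NullSingletonClass μ] [LinearOrder ι] {l r : ι → α}
    (h : ∀ i j, i < j → r i ≤ l j) :
    Pairwise fun i j => AEDisjoint μ (Set.Icc (l i) (r i)) (Set.Icc (l j) (r j)) := by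
  have of_lt {i j : ι} (hij : i < j) :
      AEDisjoint μ (Set.Icc (l i) (r i)) (Set.Icc (l j) (r j)) := by
    refine Set.Subsingleton.measure_zero (fun x hx y hy => ?_) μ
    exact le_antisymm (hx.1.2.trans ((h i j hij).trans hy.2.1))
      (hy.1.2.trans ((h i j hij).trans hx.2.1))
  intro i j hij
  exact hij.lt_or_gt.elim of_lt fun hji => (of_lt hji).symm

theorem iUnion_Icc_castSucc_succ {α : Type*} [LinearOrder α] {M : ℕ} {t : Fin (M + 2) → α}
    (ht : Monotone t) :
    ⋃ i : Fin (M + 1), Set.Icc (t i.castSucc) (t i.succ) =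
      Set.Icc (t 0) (t (Fin.last (M + 1))) := by
  induction M with
  | zero => exact iSup_unique (ι := Fin 1) ..
  | succ M ih =>
    have tail := ih (ht.comp Fin.strictMono_succ.monotone)
    rw [Set.iUnion_fin_add_one_eq_iUnion_succ]
    calc Set.Icc (t 0) (t 1) ∪ ⋃ i : Fin (M + 1), Set.Icc (t i.succ.castSucc) (t i.succ.succ)
        = Set.Icc (t 0) (t 1) ∪ Set.Icc (t 1) (t (Fin.last (M + 2))) := congrArg _ tail
      _ = Set.Icc (t 0) (t (Fin.last (M + 2))) :=
        Set.Icc_union_Icc_eq_Icc (ht (Fin.zero_le _)) (ht (Fin.le_last _))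

section Tilings

variable {M : ℕ} {K : Fin M → Set ℝ}

theorem TilesZ.aedisjoint_tr_tr (hK : TilesZ K) {i j : Fin M} {β γ : ℤ} (h : i ≠ j ∨ β ≠ γ) :
    AEDisjoint volume (tr β (K i)) (tr γ (K j)) := by
  rcases eq_or_ne β γ with rfl | hβγ
  · exact aedisjoint_tr β (hK.1 i j (h.resolve_right (not_not_intro rfl)))
  · exact AEDisjoint.mono (hK.2.1 β γ hβγ) (tr_mono β (Set.subset_iUnion K i))
      (tr_mono γ (Set.subset_iUnion K j))

theorem TilesZ.isSelfAffineCollection (hK : TilesZ K) {B : ℤ} {Γ : Fin M → Fin M → Finset ℤ}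
    (hcompact : ∀ i, IsCompact (K i))
    (hB : ∀ i, (fun x => (B : ℝ) * x) '' K i =ᵐ[volume] ⋃ j, ⋃ γ ∈ Γ i j, tr γ (K j)) :
    IsSelfAffineCollection B K Γ where
  compact := hcompact
  selfaffine := hB
  disj _ _ _ _ _ _ _ h := hK.aedisjoint_tr_tr h

theorem tilesZ_of_iUnion_eq_Icc {a : ℝ}
    (hdisj : Pairwise fun i j => AEDisjoint volume (K i) (K j))
    (hunion : ⋃ i, K i = Set.Icc a (a + 1)) : TilesZ K := by
  have htr (ℓ : ℤ) : tr ℓ (⋃ i, K i) = Set.Icc (a + ℓ) (a + ℓ + 1) := by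
    rw [hunion, tr_Icc]
    congr 1 <;> ring
  refine ⟨fun i j hij => hdisj hij, fun ℓ₁ ℓ₂ hℓ => ?_, ?_⟩
  · rw [htr, htr]
    have hsucc (m n : ℤ) (hmn : m < n) : a + m + 1 ≤ a + n := by
      have : (m : ℝ) + 1 ≤ n := mod_cast hmn
      linarith
    exact pairwise_aedisjoint_Icc volume hsucc hℓ
  · simp only [htr, iUnion_Icc_add_intCast, Set.sdiff_self, measure_empty]

theorem tilesZ_Icc_castSucc_succ {t : Fin (M + 2) → ℝ} (ht : Monotone t)
    (hlast : t (Fin.last (M + 1)) = t 0 + 1) :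
    TilesZ fun i : Fin (M + 1) => Set.Icc (t i.castSucc) (t i.succ) := by
  refine tilesZ_of_iUnion_eq_Icc (a := t 0) ?_ ?_
  · exact pairwise_aedisjoint_Icc volume fun i j hij => ht (Fin.succ_le_castSucc_iff.2 hij)
  · rw [iUnion_Icc_castSucc_succ ht, hlast]

end Tilings

theorem completeResidues_Ico {B : ℤ} (hB : 0 < B) (a : ℤ) :
    CompleteResidues B (Finset.Ico a (a + B)) := by
  intro v
  obtain ⟨m, hm, huniq⟩ := existsUnique_add_zsmul_mem_Ico hB v a
  refine ⟨v + m • B, ⟨Finset.mem_Ico.2 hm, -m, by rw [smul_eq_mul]; ring⟩, ?_⟩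
  rintro d ⟨hd, z, hz⟩
  have hdz : d = v + (-z) • B := by rw [hz, smul_eq_mul]; ring
  have hmem : v + (-z) • B ∈ Set.Ico a (a + B) := hdz ▸ Finset.mem_Ico.1 hd
  have hzm : -z = m := huniq (-z) hmem
  rw [hdz, hzm]

theorem completeResidues_two_pair (a : ℤ) : CompleteResidues 2 {a, a + 1} := by
  have hIco : Finset.Ico a (a + 2) = {a, a + 1} := by
    ext d
    simp only [Finset.mem_Ico, Finset.mem_insert, Finset.mem_singleton]
    omega
  exact hIco ▸ completeResidues_Ico two_pos a

namespace ThreePrototiles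

/-- The endpoints `-3/4 < -1/2 < 0 < 1/4` cutting `[-3/4, 1/4]` into the three prototiles. -/
noncomputable def breakpoint : Fin 4 → ℝ := ![-(3 / 4), -(1 / 2), 0, 1 / 4]

/-- The prototiles `K₁', K₂', K₃'` of the example, indexed from `0`. -/
noncomputable def prototile : Fin 3 → Set ℝ :=
  ![Set.Icc (-(3 / 4)) (-(1 / 2)), Set.Icc (-(1 / 2)) 0, Set.Icc 0 (1 / 4)]

/-- The digit sets `Γ i j` of the example: `2 K_i` consists of the translates of `K_j` by the
elements of `Γ i j`. -/
def digits : Fin 3 → Fin 3 → Finset ℤ :=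
  ![![∅, {-1}, ∅],
    ![{0}, {0}, {-1}],
    ![{1}, ∅, {0}]]

theorem monotone_breakpoint : Monotone breakpoint := by
  refine Fin.monotone_iff_le_succ.2 fun i => ?_
  fin_cases i
  · change (-(3 / 4) : ℝ) ≤ -(1 / 2)
    norm_num
  · change (-(1 / 2) : ℝ) ≤ 0
    norm_num
  · change (0 : ℝ) ≤ 1 / 4
    norm_num

theorem prototile_eq_Icc_breakpoint :
    prototile = fun i => Set.Icc (breakpoint i.castSucc) (breakpoint i.succ) := by
  funext i
  fin_cases i <;> rfl

theorem iUnion_prototile : ⋃ i, prototile i = Set.Icc (-(3 / 4)) (1 / 4) := by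
  rw [prototile_eq_Icc_breakpoint]
  exact iUnion_Icc_castSucc_succ monotone_breakpoint

theorem tilesZ_prototile : TilesZ prototile := by
  rw [prototile_eq_Icc_breakpoint]
  refine tilesZ_Icc_castSucc_succ monotone_breakpoint ?_
  change (1 / 4 : ℝ) = -(3 / 4) + 1
  norm_num

theorem isCompact_prototile (i : Fin 3) : IsCompact (prototile i) := by
  rw [prototile_eq_Icc_breakpoint]
  exact isCompact_Icc

theorem two_mul_image_prototile_zero :
    (fun x => (2 : ℝ) * x) '' prototile 0 = tr (-1) (prototile 1) := by
  simp only [prototile, Matrix.cons_val, Set.image_mul_left_Icc' (zero_lt_two' ℝ), tr_Icc]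
  norm_num

theorem two_mul_image_prototile_one :
    (fun x => (2 : ℝ) * x) '' prototile 1 = prototile 0 ∪ prototile 1 ∪ tr (-1) (prototile 2) := by
  simp only [prototile, Matrix.cons_val, Set.image_mul_left_Icc' (zero_lt_two' ℝ), tr_Icc]
  rw [Set.Icc_union_Icc_eq_Icc (by norm_num) (by norm_num), Set.union_comm,
    Set.Icc_union_Icc' (by norm_num) (by norm_num)]
  norm_num

theorem two_mul_image_prototile_two :
    (fun x => (2 : ℝ) * x) '' prototile 2 = tr 1 (prototile 0) ∪ prototile 2 := by
  simp only [prototile, Matrix.cons_val, Set.image_mul_left_Icc' (zero_lt_two' ℝ), tr_Icc]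
  rw [Set.union_comm, Set.Icc_union_Icc' (by norm_num) (by norm_num)]
  norm_num

theorem two_mul_image_prototile (i : Fin 3) :
    (fun x => (2 : ℝ) * x) '' prototile i = ⋃ j, ⋃ γ ∈ digits i j, tr γ (prototile j) := by
  fin_cases i
  · refine two_mul_image_prototile_zero.trans ?_
    simp [digits, Set.iUnion_fin_add_one_eq_iUnion_succ]
  · refine two_mul_image_prototile_one.trans ?_
    simp [digits, Set.iUnion_fin_add_one_eq_iUnion_succ, tr_zero, Set.union_assoc]
  · refine two_mul_image_prototile_two.trans ?_
    simp [digits, Set.iUnion_fin_add_one_eq_iUnion_succ, tr_zero]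

theorem isSelfAffineCollection_prototile : IsSelfAffineCollection 2 prototile digits :=
  tilesZ_prototile.isSelfAffineCollection isCompact_prototile
    fun i => .of_eq (mod_cast two_mul_image_prototile i)

theorem biUnion_digits_zero : (Finset.univ.biUnion fun i => digits i 0) = {0, 1} := by decide

theorem biUnion_digits_one : (Finset.univ.biUnion fun i => digits i 1) = {-1, 0} := by decide

theorem biUnion_digits_two : (Finset.univ.biUnion fun i => digits i 2) = {-1, 0} := by decide

theorem completeResidues_biUnion_digits (j : Fin 3) :
    CompleteResidues 2 (Finset.univ.biUnion fun i => digits i j) := by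
  fin_cases j
  · exact biUnion_digits_zero ▸ completeResidues_two_pair 0
  · exact biUnion_digits_one ▸ completeResidues_two_pair (-1)
  · exact biUnion_digits_two ▸ completeResidues_two_pair (-1)

end ThreePrototiles

/-- the set `K = [−3/4, 1/4]` with `B = 2` and the three prototiles
`K₁' = [−3/4,−1/2]`, `K₂' = [−1/2,0]`, `K₃' = [0,1/4]` is an integral self-affine ℤ-tiling
set with 3 prototiles, with the indicated dilation identities and digit sets
`D₁' = {0,1}`, `D₂' = D₃' = {−1,0}`, each a complete set of coset representatives of `ℤ/2ℤ`. -/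
theorem example_three_prototiles
    (K₁ K₂ K₃ : Set ℝ)
    (hK₁ : K₁ = Set.Icc (-(3 / 4) : ℝ) (-(1 / 2)))
    (hK₂ : K₂ = Set.Icc (-(1 / 2) : ℝ) 0)
    (hK₃ : K₃ = Set.Icc (0 : ℝ) (1 / 4))
    (Γ : Fin 3 → Fin 3 → Finset ℤ)
    (hΓ : Γ = ![![(∅ : Finset ℤ), {-1}, ∅],
                ![{0}, {0}, {-1}],
                ![{1}, ∅, {0}]]) :
    (fun x => (2 : ℝ) * x) '' K₁ = tr (-1) K₂ ∧
    (fun x => (2 : ℝ) * x) '' K₂ = K₁ ∪ K₂ ∪ tr (-1) K₃ ∧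
    (fun x => (2 : ℝ) * x) '' K₃ = tr 1 K₁ ∪ K₃ ∧
    IsSelfAffineCollection 2 ![K₁, K₂, K₃] Γ ∧
    (Finset.univ.biUnion fun i => Γ i 0) = ({0, 1} : Finset ℤ) ∧
    (Finset.univ.biUnion fun i => Γ i 1) = ({-1, 0} : Finset ℤ) ∧
    (Finset.univ.biUnion fun i => Γ i 2) = ({-1, 0} : Finset ℤ) ∧
    (∀ j : Fin 3, CompleteResidues 2 (Finset.univ.biUnion fun i => Γ i j)) ∧
    TilesZ ![K₁, K₂, K₃] ∧
    (⋃ i, (![K₁, K₂, K₃] : Fin 3 → Set ℝ) i) = Set.Icc (-(3 / 4) : ℝ) (1 / 4) := by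
  open ThreePrototiles in
    subst hK₁ hK₂ hK₃ hΓ
    exact ⟨two_mul_image_prototile_zero, two_mul_image_prototile_one,
      two_mul_image_prototile_two, isSelfAffineCollection_prototile,
      biUnion_digits_zero, biUnion_digits_one, biUnion_digits_two,
      completeResidues_biUnion_digits, tilesZ_prototile, iUnion_prototile⟩

end ISAMT1
end

section
/- (Final example, irrational case) Let a ∈ (0,1) be irrational and K = [−a, 1−a] ⊆ ℝ. Then K is not an integral self-affine multi-tile associated with B = 2: there is no M ≥ 1 and no collection of compact sets K_1,…,K_M of positive Lebesgue measure with K = ⋃_{i=1}^M K_i (the K_i essentially disjoint) forming an integral self-affine collection associated with B = 2. Combined with the rational case, for a ∈ (0,1) the set K = [−a, 1−a] is an integral self-affine multi-tile associated with B = 2 if and only if a ∈ ℚ. -/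
open MeasureTheory Pointwise

namespace ISAMT1

/-- `K = [−a, 1−a]` is an integral self-affine multi-tile associated with `B = 2`:
it admits a decomposition into finitely many essentially disjoint compact prototiles of
positive measure forming an integral self-affine collection for `B = 2` which ℤ-tiles `ℝ`. -/
def IsSelfAffineMultiTile (a : ℝ) : Prop :=
  ∃ (M : ℕ) (Kc : Fin M → Set ℝ) (Γ : Fin M → Fin M → Finset ℤ),
    1 ≤ M ∧ (∀ i, 0 < volume (Kc i)) ∧
    IsSelfAffineCollection 2 Kc Γ ∧ TilesZ Kc ∧
    Set.Icc (-a) (1 - a) =ᵐ[volume] ⋃ i, Kc i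

/-!
Work with any base `B` with `|B| > 1` and any `a : ℝ`, and call `θ` a *cut* of the prototiles if
each of them lies, up to a null set, on one side of `θ`. Every `γ + K j` is essentially contained
in some `B K i` or essentially disjoint from `B K`, and `B K` is an interval at least as long as
the one spanned by `γ + K j`. Hence if `θ ∈ [-a, 1 - a]` is a cut, so are all the numbers
`B θ - γ`, `γ ∈ ℤ`. The endpoint `-a` is trivially a cut, so the representatives of `-B ^ k a`
modulo `1` in `[-a, 1 - a)` are all cuts. As the prototiles essentially cover `[-a, 1 - a]`, two
cuts in this interval have different sets of prototiles to their left, so there are only finitely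
many of them and `B ^ k a` is eventually periodic modulo `1`: `a` is rational.

Conversely, for `a = p / q` the intervals of the grid `q⁻¹ ℤ` inside `[-a, 1 - a]` are prototiles,
because `B` maps the grid into itself and `q` consecutive grid intervals represent all grid
intervals modulo `ℤ`.
-/

open Set Function

/-- The unit interval `[-a, 1 - a]` is an integral self-affine multi-tile associated with `B`; for
`B = 2` this unfolds to `IsSelfAffineMultiTile a`. -/
def IsSelfAffineMultiTileFor (B : ℤ) (a : ℝ) : Prop :=
  ∃ (M : ℕ) (K : Fin M → Set ℝ) (Γ : Fin M → Fin M → Finset ℤ),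
    1 ≤ M ∧ (∀ i, 0 < volume (K i)) ∧ IsSelfAffineCollection B K Γ ∧ TilesZ K ∧
      Icc (-a) (1 - a) =ᵐ[volume] ⋃ i, K i

theorem tr_eq_vadd (c : ℤ) (E : Set ℝ) : tr c E = (c : ℝ) +ᵥ E := rfl

theorem tr_iUnion {ι : Sort*} (c : ℤ) (E : ι → Set ℝ) : tr c (⋃ i, E i) = ⋃ i, tr c (E i) :=
  image_iUnion

theorem tr_Icc_s19 (c : ℤ) (x y : ℝ) : tr c (Icc x y) = Icc (c + x) (c + y) :=
  image_const_add_Icc _ _ _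

theorem aedisjoint_tr_iff {c : ℤ} {E F : Set ℝ} :
    AEDisjoint volume (tr c E) (tr c F) ↔ AEDisjoint volume E F := by
  simp only [AEDisjoint, tr_eq_vadd, ← vadd_set_inter, measure_vadd]

theorem smul_set_ae_mono {E : Type*} [NormedAddCommGroup E] [NormedSpace ℝ E] [MeasurableSpace E]
    [BorelSpace E] [FiniteDimensional ℝ E] {μ : Measure E} [μ.IsAddHaarMeasure] {r : ℝ} (hr : r ≠ 0)
    {s t : Set E} (h : s ≤ᵐ[μ] t) : r • s ≤ᵐ[μ] r • t := by
  rw [ae_le_set, ← smul_set_sdiff₀ hr, Measure.addHaar_smul, ae_le_set.1 h, mul_zero]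

theorem smul_uIcc (r x y : ℝ) : r • uIcc x y = uIcc (r * x) (r * y) :=
  image_const_mul_uIcc r x y

section Tiling

variable {M : ℕ} {K : Fin M → Set ℝ}

theorem TilesZ.pairwise_aedisjoint_tr (h : TilesZ K) :
    Pairwise (AEDisjoint volume on fun p : ℤ × Fin M => tr p.1 (K p.2)) := by
  rintro ⟨β, i⟩ ⟨γ, j⟩ hne
  obtain rfl | hβγ := eq_or_ne β γ
  · exact aedisjoint_tr_iff.2 (h.1 i j fun hij => hne (hij ▸ rfl))
  · exact AEDisjoint.mono (h.2.1 β γ hβγ) (image_mono (subset_iUnion K i))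
      (image_mono (subset_iUnion K j))

theorem tilesZ_of_pairwise_aedisjoint_tr
    (hdisj : Pairwise (AEDisjoint volume on fun p : ℤ × Fin M => tr p.1 (K p.2)))
    (hcover : volume (⋃ p : ℤ × Fin M, tr p.1 (K p.2))ᶜ = 0) : TilesZ K := by
  refine ⟨fun i j hij => ?_, fun β γ hβγ => ?_, ?_⟩
  · exact aedisjoint_tr_iff.1 (hdisj (i := (0, i)) (j := (0, j)) (by simpa using hij))
  · simp only [tr_iUnion]
    exact AEDisjoint.iUnion_left_iff.2 fun i => AEDisjoint.iUnion_right_iff.2 fun j =>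
      hdisj (i := (β, i)) (j := (γ, j)) (by simp [hβγ])
  · simpa only [tr_iUnion, iUnion_prod', compl_eq_univ_sdiff] using hcover

theorem IsSelfAffineCollection.tr_ae_subset_or_aedisjoint {B : ℤ} {Γ : Fin M → Fin M → Finset ℤ}
    (hK : IsSelfAffineCollection B K Γ) (hT : TilesZ K) (γ : ℤ) (j : Fin M) :
    (∃ i, tr γ (K j) ≤ᵐ[volume] (B : ℝ) • K i) ∨
      AEDisjoint volume (tr γ (K j)) ((B : ℝ) • ⋃ i, K i) := by
  by_cases hγ : ∃ i, γ ∈ Γ i j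
  · obtain ⟨i, hi⟩ := hγ
    have hsub : tr γ (K j) ⊆ ⋃ j, ⋃ γ ∈ Γ i j, tr γ (K j) :=
      subset_iUnion_of_subset j (subset_biUnion_of_mem (u := fun γ => tr γ (K j)) hi)
    exact .inl ⟨i, hsub.eventuallyLE.trans (hK.selfaffine i).symm.le⟩
  · refine .inr ?_
    rw [smul_set_iUnion]
    refine AEDisjoint.iUnion_right_iff.2 fun i => ?_
    refine AEDisjoint.congr ?_ .rfl (hK.selfaffine i)
    simp only [AEDisjoint.iUnion_right_iff]
    intro j' γ' hγ'
    refine hT.pairwise_aedisjoint_tr (i := (γ, j)) (j := (γ', j')) ?_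
    rintro ⟨⟩
    exact hγ ⟨i, hγ'⟩

end Tiling

section Cuts

/-- The set `E` lies, up to a null set, in one of the two half-lines bounded by `θ`. -/
def EssOneSided (E : Set ℝ) (θ : ℝ) : Prop :=
  E ≤ᵐ[volume] Ici θ ∨ E ≤ᵐ[volume] Iic θ

theorem EssOneSided.mono {E F : Set ℝ} {θ : ℝ} (hF : EssOneSided F θ) (h : E ≤ᵐ[volume] F) :
    EssOneSided E θ :=
  hF.imp h.trans h.trans

theorem EssOneSided.smul {E : Set ℝ} {θ r : ℝ} (h : EssOneSided E θ) (hr : r ≠ 0) :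
    EssOneSided (r • E) (r * θ) := by
  have hsub : EssOneSided (r • Ici θ) (r * θ) ∧ EssOneSided (r • Iic θ) (r * θ) := by
    simp only [EssOneSided, ← image_smul]
    obtain hr | hr := hr.lt_or_gt
    · refine ⟨.inr (LE.le.eventuallyLE ?_), .inl (LE.le.eventuallyLE ?_)⟩ <;>
        exact image_subset_iff.2 fun x hx => mul_le_mul_of_nonpos_left hx hr.le
    · refine ⟨.inl (LE.le.eventuallyLE ?_), .inr (LE.le.eventuallyLE ?_)⟩ <;>
        exact image_subset_iff.2 fun x hx => mul_le_mul_of_nonneg_left hx hr.le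
  exact h.elim (fun h => hsub.1.mono (smul_set_ae_mono hr h))
    (fun h => hsub.2.mono (smul_set_ae_mono hr h))

theorem essOneSided_tr_iff {E : Set ℝ} {θ : ℝ} {c : ℤ} :
    EssOneSided (tr c E) (c + θ) ↔ EssOneSided E θ := by
  rw [EssOneSided, ← image_const_add_Ici, ← image_const_add_Iic]
  exact or_congr (vadd_set_ae_le (c : ℝ)) (vadd_set_ae_le (c : ℝ))

theorem Icc_sdiff_Icc_subset_Ici_or_Iic {u v x y t : ℝ} (hlen : v - u ≤ y - x)
    (ht : t ∈ Icc x y) : Icc u v \ Icc x y ⊆ Ici t ∨ Icc u v \ Icc x y ⊆ Iic t := by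
  obtain hxu | hux := le_or_gt x u
  · refine .inl fun z ⟨hz, hz'⟩ => ?_
    have : y < z := not_le.1 fun hzy => hz' ⟨hxu.trans hz.1, hzy⟩
    exact ht.2.trans this.le
  · refine .inr fun z ⟨hz, hz'⟩ => ?_
    have : z < x := not_le.1 fun hxz => hz' ⟨hxz, by linarith [hz.2]⟩
    exact this.le.trans ht.1

theorem essOneSided_of_aedisjoint_Icc {E : Set ℝ} {u v x y t : ℝ} (hE : E ≤ᵐ[volume] Icc u v)
    (hdisj : AEDisjoint volume E (Icc x y)) (hlen : v - u ≤ y - x) (ht : t ∈ Icc x y) :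
    EssOneSided E t := by
  have hsdiff : E ≤ᵐ[volume] (Icc u v \ Icc x y : Set ℝ) := by
    filter_upwards [hE, measure_eq_zero_iff_ae_notMem.1 hdisj] with z hz hz' hzE
    exact ⟨hz hzE, fun hzI => hz' ⟨hzE, hzI⟩⟩
  exact (Icc_sdiff_Icc_subset_Ici_or_Iic hlen ht).imp
    (fun h => hsdiff.trans h.eventuallyLE) (fun h => hsdiff.trans h.eventuallyLE)

/-- The point `θ` cuts the family `K`: no member has mass on both sides of `θ`. -/
def IsCut {ι : Type*} (K : ι → Set ℝ) (θ : ℝ) : Prop :=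
  ∀ j, EssOneSided (K j) θ

/-- Distinct cuts in `I` have distinct sets of members to their left. -/
theorem finite_isCut {ι : Type*} [Finite ι] {K : ι → Set ℝ} {I : Set ℝ} [I.OrdConnected]
    (hI : I ≤ᵐ[volume] ⋃ i, K i) : {θ ∈ I | IsCut K θ}.Finite := by
  let left (θ : ℝ) : Set ι := {j | K j ≤ᵐ[volume] Iic θ}
  suffices StrictMonoOn left {θ ∈ I | IsCut K θ} from
    .of_injOn (mapsTo_univ left _) this.injOn finite_univ
  rintro θ ⟨hθI, -⟩ θ' ⟨hθ'I, hcut⟩ hlt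
  refine ssubset_iff_subset_not_subset.2 ⟨fun j hj => ?_, fun hsub => ?_⟩
  · exact (mem_ofPred.1 hj).trans (Iic_subset_Iic.2 hlt.le).eventuallyLE
  · have hdisj (j : ι) : AEDisjoint volume (K j) (Ioo θ θ') := by
      obtain hj | hj := hcut j
      · have hhalf : Disjoint (Ici θ') (Ioo θ θ') :=
          (Iio_disjoint_Ici le_rfl).symm.mono_right Ioo_subset_Iio_self
        exact hhalf.aedisjoint.mono_ae hj .rfl
      · have hleft : K j ≤ᵐ[volume] Iic θ := hsub hj
        have hhalf : Disjoint (Iic θ) (Ioo θ θ') :=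
          (Iic_disjoint_Ioi le_rfl).mono_right Ioo_subset_Ioi_self
        exact hhalf.aedisjoint.mono_ae hleft .rfl
    have hcover : Ioo θ θ' ≤ᵐ[volume] ⋃ j, K j :=
      (Ioo_subset_Icc_self.trans (I.Icc_subset hθI hθ'I)).eventuallyLE.trans hI
    have hnull : volume (Ioo θ θ') = 0 := by
      simpa [AEDisjoint] using (AEDisjoint.iUnion_left_iff.2 hdisj).mono_ae hcover .rfl
    rw [Real.volume_Ioo, ENNReal.ofReal_eq_zero] at hnull
    linarith

variable {B : ℤ} {M : ℕ} {K : Fin M → Set ℝ} {Γ : Fin M → Fin M → Finset ℤ} {a : ℝ}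

theorem IsCut.mul_sub_intCast {θ : ℝ} (hcut : IsCut K θ) (hB : B ≠ 0)
    (hK : IsSelfAffineCollection B K Γ) (hT : TilesZ K)
    (hKa : Icc (-a) (1 - a) =ᵐ[volume] ⋃ i, K i) (hθ : θ ∈ Icc (-a) (1 - a)) (γ : ℤ) :
    IsCut K (B * θ - γ) := by
  intro j
  have hB' : (B : ℝ) ≠ 0 := mod_cast hB
  rw [← essOneSided_tr_iff (c := γ), add_sub_cancel]
  obtain ⟨i, hi⟩ | hdisj := hK.tr_ae_subset_or_aedisjoint hT γ j
  · exact ((hcut i).smul hB').mono hi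
  · have hscaled : (B : ℝ) • Icc (-a) (1 - a) = uIcc (B * -a) (B * (1 - a)) := by
      rw [← uIcc_of_le (by linarith), smul_uIcc]
    have hsub : tr γ (K j) ≤ᵐ[volume] Icc (γ + -a) (γ + (1 - a)) := by
      rw [← tr_Icc_s19]
      exact (vadd_set_ae_le (γ : ℝ)).2 ((subset_iUnion K j).eventuallyLE.trans hKa.symm.le)
    have hlen : γ + (1 - a) - (γ + -a) ≤
        max (B * -a) (B * (1 - a)) - min (B * -a) (B * (1 - a)) := by
      have : (1 : ℝ) ≤ |(B : ℝ)| := mod_cast Int.one_le_abs hB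
      rw [max_sub_min_eq_abs]
      ring_nf
      exact this
    refine essOneSided_of_aedisjoint_Icc hsub (hdisj.mono_ae .rfl ?_) hlen ?_
    · exact hscaled.symm.le.eventuallyLE.trans (smul_set_ae_mono hB' hKa.le)
    · change B * θ ∈ uIcc (B * -a) (B * (1 - a))
      exact hscaled ▸ smul_mem_smul_set hθ

theorem isCut_left_endpoint (hKa : Icc (-a) (1 - a) =ᵐ[volume] ⋃ i, K i) : IsCut K (-a) :=
  fun j => .inl <| (subset_iUnion K j).eventuallyLE.trans <|
    hKa.symm.le.trans Icc_subset_Ici_self.eventuallyLE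

theorem isCut_toIcoMod_pow_mul (hB : B ≠ 0) (hK : IsSelfAffineCollection B K Γ) (hT : TilesZ K)
    (hKa : Icc (-a) (1 - a) =ᵐ[volume] ⋃ i, K i) (k : ℕ) :
    IsCut K (toIcoMod one_pos (-a) (B ^ k * -a)) := by
  induction k with
  | zero => simpa using isCut_left_endpoint hKa
  | succ k ih =>
    have hmem := toIcoMod_mem_Ico one_pos (-a) ((B : ℝ) ^ k * -a)
    rw [neg_add_eq_sub] at hmem
    convert ih.mul_sub_intCast hB hK hT hKa (Ico_subset_Icc_self hmem)
      (toIcoDiv one_pos (-a) ((B : ℝ) ^ (k + 1) * -a) -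
        B * toIcoDiv one_pos (-a) ((B : ℝ) ^ k * -a)) using 1
    simp only [toIcoMod, zsmul_eq_mul]
    push_cast
    ring

theorem exists_rat_eq_of_pow_mul_sub_eq_intCast (hB : 1 < |B|) {k l : ℕ} (hkl : k ≠ l) {n : ℤ}
    (h : (B : ℝ) ^ k * a - B ^ l * a = n) : ∃ r : ℚ, (r : ℝ) = a := by
  have hpow : B ^ k ≠ B ^ l := (Int.pow_right_injective (by grind)).ne hkl
  have hpow' : (B : ℝ) ^ k - B ^ l ≠ 0 := sub_ne_zero.2 (mod_cast hpow)
  refine ⟨n / (B ^ k - B ^ l), ?_⟩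
  push_cast
  rw [← h, ← sub_mul, mul_div_cancel_left₀ _ hpow']

theorem IsSelfAffineMultiTileFor.exists_rat_eq (hB : 1 < |B|) (h : IsSelfAffineMultiTileFor B a) :
    ∃ r : ℚ, (r : ℝ) = a := by
  obtain ⟨M, K, Γ, -, -, hK, hT, hKa⟩ := h
  have hB0 : B ≠ 0 := abs_pos.1 (zero_lt_one.trans hB)
  let θ (k : ℕ) : ℝ := toIcoMod one_pos (-a) (B ^ k * -a)
  have hθ (k : ℕ) : θ k ∈ {t ∈ Ico (-a) (-a + 1) | IsCut K t} :=
    ⟨toIcoMod_mem_Ico _ _ _, isCut_toIcoMod_pow_mul hB0 hK hT hKa k⟩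
  have hcover : Ico (-a) (-a + 1) ≤ᵐ[volume] ⋃ i, K i := by
    rw [neg_add_eq_sub]
    exact Ico_subset_Icc_self.eventuallyLE.trans hKa.le
  obtain ⟨k, l, hkl, hθkl⟩ := Finite.exists_lt_map_eq_of_forall_mem hθ (finite_isCut hcover)
  obtain ⟨n, hn⟩ := (toIcoMod_eq_toIcoMod one_pos).1 hθkl
  refine exists_rat_eq_of_pow_mul_sub_eq_intCast hB hkl.ne (n := n) ?_
  rw [zsmul_one] at hn
  linarith

end Cuts

section Grid

variable (q : ℕ)

theorem monotone_intCast_div : Monotone fun n : ℤ => (n : ℝ) / q := fun m n h => by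
  dsimp only
  gcongr

/-- The interval `[n / q, (n + 1) / q]` of the grid `q⁻¹ ℤ`; it is `{0}` for `q = 0`. -/
def gridCell (n : ℤ) : Set ℝ :=
  Icc ((n : ℝ) / q) (((n + 1 : ℤ) : ℝ) / q)

theorem pairwise_aedisjoint_gridCell : Pairwise (AEDisjoint volume on gridCell q) :=
  fun _ _ h => AEDisjoint.congr
    ((monotone_intCast_div q).pairwise_disjoint_on_Ioc_succ h).aedisjoint
    Ioc_ae_eq_Icc.symm Ioc_ae_eq_Icc.symm

theorem biUnion_gridCell_ae_eq (m n : ℤ) :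
    ⋃ k ∈ Ico m n, gridCell q k =ᵐ[volume] Icc ((m : ℝ) / q) (n / q) := by
  refine .trans ?_ (Ioc_ae_eq_Icc (a := (m : ℝ) / q) (b := (n : ℝ) / q))
  rw [← (monotone_intCast_div q).biUnion_Ico_Ioc_map_succ]
  exact Filter.EventuallyEq.countable_bUnion (to_countable _) fun k _ => Ioc_ae_eq_Icc.symm

/-- The indices of the `|B|` grid cells that make up `B` times the cell of index `m`; the minimum
and the maximum account for the sign of `B`. -/
noncomputable def dilatedIndices (B m : ℤ) : Finset ℤ :=
  Finset.Ico (min (B * m) (B * (m + 1))) (max (B * m) (B * (m + 1)))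

theorem smul_gridCell_ae_eq (B m : ℤ) :
    (B : ℝ) • gridCell q m =ᵐ[volume] ⋃ k ∈ dilatedIndices B m, gridCell q k := by
  have hmono := monotone_intCast_div q
  have hle : (m : ℝ) / q ≤ ((m + 1 : ℤ) : ℝ) / q := hmono (by omega)
  have himage : (B : ℝ) • gridCell q m =
      uIcc (((B * m : ℤ) : ℝ) / q) (((B * (m + 1) : ℤ) : ℝ) / q) := by
    rw [gridCell, ← uIcc_of_le hle, smul_uIcc, Int.cast_mul B m, Int.cast_mul B (m + 1),
      mul_div_assoc, mul_div_assoc]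
  simp only [dilatedIndices, Finset.mem_Ico]
  rw [himage, uIcc, ← hmono.map_min, ← hmono.map_max]
  exact (biUnion_gridCell_ae_eq q _ _).symm

variable [NeZero q]

theorem tr_gridCell (γ m : ℤ) : tr γ (gridCell q m) = gridCell q (γ * q + m) := by
  have hq : (q : ℝ) ≠ 0 := NeZero.ne _
  rw [gridCell, tr_Icc_s19, gridCell]
  congr 1
  · push_cast
    field_simp
  · push_cast
    field_simp
    ring

theorem iUnion_gridCell : ⋃ n, gridCell q n = univ := by
  have hq : (0 : ℝ) < (q : ℝ)⁻¹ := inv_pos.2 (Nat.cast_pos.2 (NeZero.pos q))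
  simpa only [gridCell, zsmul_eq_mul, div_eq_mul_inv] using iUnion_Icc_zsmul hq

theorem volume_gridCell_pos (n : ℤ) : 0 < volume (gridCell q n) := by
  have hq : (0 : ℝ) < q := Nat.cast_pos.2 (NeZero.pos q)
  rw [gridCell, Real.volume_Icc, ENNReal.ofReal_pos, ← sub_div]
  refine div_pos ?_ hq
  push_cast
  linarith

/-- Division with remainder in `s, …, s + q - 1`: it sends `(γ, j)` to the index of the grid cell
obtained from the cell of index `s + j` by the translation by `γ`. -/
def gridIndex (s : ℤ) : ℤ × Fin q ≃ ℤ :=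
  (Int.divModEquiv q).symm.trans (Equiv.addLeft s)

theorem gridIndex_apply (s γ : ℤ) (j : Fin q) : gridIndex q s (γ, j) = s + (γ * q + j) := rfl

/-- The `q` grid cells that make up the unit interval `[s / q, s / q + 1]`. -/
def gridTile (s : ℤ) (j : Fin q) : Set ℝ :=
  gridCell q (gridIndex q s (0, j))

theorem tr_gridTile (s γ : ℤ) (j : Fin q) :
    tr γ (gridTile q s j) = gridCell q (gridIndex q s (γ, j)) := by
  rw [gridTile, tr_gridCell, gridIndex_apply, gridIndex_apply]
  congr 1
  ring

theorem pairwise_aedisjoint_tr_gridTile (s : ℤ) :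
    Pairwise (AEDisjoint volume on fun p : ℤ × Fin q => tr p.1 (gridTile q s p.2)) := by
  simp only [tr_gridTile]
  exact (pairwise_aedisjoint_gridCell q).comp_of_injective (gridIndex q s).injective

theorem tilesZ_gridTile (s : ℤ) : TilesZ (gridTile q s) := by
  refine tilesZ_of_pairwise_aedisjoint_tr (pairwise_aedisjoint_tr_gridTile q s) ?_
  simp only [tr_gridTile]
  rw [(gridIndex q s).surjective.iUnion_comp (gridCell q), iUnion_gridCell, compl_univ,
    measure_empty]

theorem Icc_ae_eq_iUnion_gridTile (s : ℤ) :
    Icc ((s : ℝ) / q) (s / q + 1) =ᵐ[volume] ⋃ j, gridTile q s j := by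
  have hq : (q : ℝ) ≠ 0 := NeZero.ne _
  have hright : (s : ℝ) / q + 1 = ((s + q : ℤ) : ℝ) / q := by
    push_cast
    field_simp
  have hcells : ⋃ k ∈ Ico s (s + q), gridCell q k = ⋃ j, gridTile q s j := by
    refine Subset.antisymm (iUnion₂_subset fun k hk => ?_) (iUnion_subset fun j => ?_)
    · refine subset_iUnion_of_subset ⟨(k - s).toNat, by grind⟩ ?_
      rw [gridTile, gridIndex_apply]
      exact subset_of_eq (congrArg _ (by grind))
    · refine subset_biUnion_of_mem (u := gridCell q) ?_
      rw [gridIndex_apply]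
      grind
  rw [hright, ← hcells]
  exact (biUnion_gridCell_ae_eq q _ _).symm

theorem injective_gridIndex_mk (s : ℤ) (j : Fin q) : Injective fun γ => gridIndex q s (γ, j) :=
  (gridIndex q s).injective.comp (Prod.mk_left_injective j)

/-- The digit set `Γ i j` of the grid tiles `K`: those `γ` for which `γ + K j` is one of the grid
cells that make up `B K i`. -/
noncomputable def gridDigits (B s : ℤ) (i j : Fin q) : Finset ℤ :=
  (dilatedIndices B (gridIndex q s (0, i))).preimage (fun γ => gridIndex q s (γ, j))
    (injective_gridIndex_mk q s j).injOn

theorem isSelfAffineCollection_gridTile (B s : ℤ) :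
    IsSelfAffineCollection B (gridTile q s) (gridDigits q B s) where
  compact _ := isCompact_Icc
  selfaffine i := by
    refine (smul_gridCell_ae_eq q B _).trans (Filter.EventuallyEq.of_eq (Set.ext fun x => ?_))
    simp only [tr_gridTile, gridDigits, Finset.mem_preimage, mem_iUnion, exists_prop]
    rw [(gridIndex q s).surjective.exists, Prod.exists, exists_comm]
  disj _ i j β _ γ _ hne :=
    pairwise_aedisjoint_tr_gridTile q s (i := (β, i)) (j := (γ, j)) (by grind)

theorem isSelfAffineMultiTileFor_ratCast (B : ℤ) (r : ℚ) : IsSelfAffineMultiTileFor B r := by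
  have : NeZero r.den := ⟨r.den_nz⟩
  refine ⟨r.den, gridTile r.den (-r.num), gridDigits r.den B (-r.num), r.den_pos,
    fun _ => volume_gridCell_pos _ _, isSelfAffineCollection_gridTile _ _ _,
    tilesZ_gridTile _ _, ?_⟩
  have hleft : -(r : ℝ) = ((-r.num : ℤ) : ℝ) / r.den := by
    rw [Rat.cast_def, Int.cast_neg, neg_div]
  rw [← neg_add_eq_sub, hleft]
  exact Icc_ae_eq_iUnion_gridTile _ _

end Grid

theorem example_irrational_iff_rational_general {B : ℤ} (hB : 1 < |B|) (a : ℝ) :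
    IsSelfAffineMultiTileFor B a ↔ ∃ r : ℚ, (r : ℝ) = a :=
  ⟨fun h => h.exists_rat_eq hB, fun ⟨r, hr⟩ => hr ▸ isSelfAffineMultiTileFor_ratCast B r⟩

/-- final example, irrational case: for irrational `a ∈ (0,1)` the set
`K = [−a, 1−a]` is not an integral self-affine multi-tile associated with `B = 2`;
combined with the rational case, for `a ∈ (0,1)` the set `K = [−a, 1−a]` is an integral
self-affine multi-tile associated with `B = 2` if and only if `a` is rational. -/
theorem example_irrational_iff_rational :
    (∀ a : ℝ, 0 < a → a < 1 → Irrational a → ¬ IsSelfAffineMultiTile a) ∧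
    (∀ a : ℝ, 0 < a → a < 1 →
      (IsSelfAffineMultiTile a ↔ ∃ r : ℚ, (r : ℝ) = a)) := by
  have h (a : ℝ) := example_irrational_iff_rational_general (B := 2) (by norm_num) a
  exact ⟨fun a _ _ ha hK => ha ((h a).1 hK), fun a _ _ => h a⟩

end ISAMT1
end
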